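/- Let A be any real 3×3 matrix and let g : ℝ → M₃(ℝ), Ω : ℝ → ℝ³ be smooth with g(t)ᵀ·g(t) = E and g'(t) = g(t)·hat(Ω(t)) for all t, and suppose 𝕀·Ω'(t) = (𝕀·Ω(t))×Ω(t) − m·r²·g(t)ᵀ·Aᵀ·A·g(t)·Ω'(t) for all t. Define K(t) := 𝕀·Ω(t) + m·r²·g(t)ᵀ·Aᵀ·A·g(t)·Ω(t) and γ(t) := g(t)ᵀ·e₃. Then each of the following functions of t is constant: the reduced energy H(t) := (1/2)·K(t)·Ω(t); the integral F(t) := K(t)·K(t); and the Casimirs C₁(t) := K(t)·γ(t) and C₂(t) := γ(t)·γ(t). (These are the conserved quantities on which the Liouville integrability of the reduced dynamics of a rigid body with generalized rolling constraints rests.) -/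

import Mathlib

/-!
Write `J = gᵀ Aᵀ A g`, a symmetric matrix. Since `g' = g hat(Ω)` and `hat(Ω)` is skew, a space vector
`a` seen in the body frame obeys `(gᵀ a)' = (gᵀ a) × Ω + gᵀ a'` (`hasDerivAt_transpose_mulVec`). As
`Ω × Ω = 0`, also `(g Ω)' = g Ω'`; taking `a = Aᵀ A g Ω` gives `(J Ω)' = (J Ω) × Ω + J Ω'`.
The equation of motion replaces `(𝕀 + m r² J) Ω'` by `(𝕀 Ω) × Ω`, which leaves `K' = K × Ω`
(`hasDerivAt_Kmom`). Taking `a = e₃` gives `γ' = γ × Ω` (`hasDerivAt_pvec`). The dot product of two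
solutions of `u' = u × Ω` is constant, as `(u × Ω) · v + u · (v × Ω) = 0`
(`dot_const_of_cross`), which settles `F`, `C₁` and `C₂`. For the energy, `(K · Ω)' = K · Ω'` because `(K × Ω) · Ω = 0`, and
by symmetry of `𝕀 + m r² J` this equals `Ω · (𝕀 + m r² J) Ω' = Ω · ((𝕀 Ω) × Ω) = 0`.
-/

open Matrix

noncomputable section

/-- `ℝ³`. -/
abbrev R3 : Type := Fin 3 → ℝ

/-- The hat map: `hat(η) v = η × v`. -/
def hat (η : R3) : Matrix (Fin 3) (Fin 3) ℝ :=
  !![0, -η 2, η 1; η 2, 0, -η 0; -η 1, η 0, 0]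

/-- The inertia tensor `𝕀 = diag(I₁,I₂,I₃)`. -/
def Imat (I1 I2 I3 : ℝ) : Matrix (Fin 3) (Fin 3) ℝ := Matrix.diagonal ![I1, I2, I3]

/-- The kinetic momentum `K = 𝕀 Ω + m r² gᵀ Aᵀ A g Ω`. -/
def Kmom (m r I1 I2 I3 : ℝ) (A : Matrix (Fin 3) (Fin 3) ℝ)
    (g : ℝ → Matrix (Fin 3) (Fin 3) ℝ) (Ω : ℝ → R3) (t : ℝ) : R3 :=
  Imat I1 I2 I3 *ᵥ Ω t + (m * r^2) • (((g t)ᵀ * Aᵀ * A * g t) *ᵥ Ω t)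

/-- The Poisson vector `γ = gᵀ e₃`. -/
def pvec (g : ℝ → Matrix (Fin 3) (Fin 3) ℝ) (t : ℝ) : R3 := (g t)ᵀ *ᵥ ![0, 0, 1]

lemma hasDerivAt_dot {u v : ℝ → R3} {u' v' : R3} {t : ℝ}
    (hu : ∀ i, HasDerivAt (fun s => u s i) (u' i) t)
    (hv : ∀ i, HasDerivAt (fun s => v s i) (v' i) t) :
    HasDerivAt (fun s => u s ⬝ᵥ v s) (u' ⬝ᵥ v t + u t ⬝ᵥ v') t := by
  have h := HasDerivAt.fun_sum (u := Finset.univ) fun i _ => (hu i).mul (hv i)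
  rw [Finset.sum_add_distrib] at h
  exact h

lemma hasDerivAt_mulVec {P : ℝ → Matrix (Fin 3) (Fin 3) ℝ} {P' : Matrix (Fin 3) (Fin 3) ℝ}
    {v : ℝ → R3} {v' : R3} {t : ℝ}
    (hP : ∀ i j, HasDerivAt (fun s => P s i j) (P' i j) t)
    (hv : ∀ i, HasDerivAt (fun s => v s i) (v' i) t) (i : Fin 3) :
    HasDerivAt (fun s => (P s *ᵥ v s) i) ((P' *ᵥ v t + P t *ᵥ v') i) t :=
  hasDerivAt_dot (hP i) hv

lemma hat_transpose (η : R3) : (hat η)ᵀ = -hat η := by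
  ext i j
  fin_cases i <;> fin_cases j <;> simp [hat]

lemma hat_mulVec (η v : R3) : hat η *ᵥ v = crossProduct η v := by
  rw [cross_apply]
  ext i
  fin_cases i <;> simp [hat, Matrix.mulVec, dotProduct, Fin.sum_univ_three] <;> ring

lemma const_of_hasDerivAt_zero {f : ℝ → ℝ} (h : ∀ t, HasDerivAt f 0 t) (s t : ℝ) : f s = f t :=
  is_const_of_deriv_eq_zero (fun x => (h x).differentiableAt) (fun x => (h x).deriv) s t

/-- The cross product with `Ω` is skew, so the flow of `u' = u × Ω` preserves dot products. -/
lemma dot_const_of_cross {u v Ω : ℝ → R3}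
    (hu : ∀ t i, HasDerivAt (fun s => u s i) (crossProduct (u t) (Ω t) i) t)
    (hv : ∀ t i, HasDerivAt (fun s => v s i) (crossProduct (v t) (Ω t) i) t) (s t : ℝ) :
    u s ⬝ᵥ v s = u t ⬝ᵥ v t := by
  refine const_of_hasDerivAt_zero (f := fun s => u s ⬝ᵥ v s) (fun x => ?_) s t
  convert hasDerivAt_dot (hu x) (hv x) using 1
  simp only [cross_apply, dotProduct, Fin.sum_univ_three, Matrix.cons_val]
  ring

/-- The body-frame representation `w = gᵀ a` of a moving space vector `a` satisfies
`w' = w × Ω + gᵀ a'`. -/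
lemma hasDerivAt_transpose_mulVec {g : ℝ → Matrix (Fin 3) (Fin 3) ℝ} {Ω a : ℝ → R3} {a' : R3}
    {t : ℝ} (hg : ∀ i j, HasDerivAt (fun s => g s i j) ((g t * hat (Ω t)) i j) t)
    (ha : ∀ i, HasDerivAt (fun s => a s i) (a' i) t) (i : Fin 3) :
    HasDerivAt (fun s => ((g s)ᵀ *ᵥ a s) i)
      ((crossProduct ((g t)ᵀ *ᵥ a t) (Ω t) + (g t)ᵀ *ᵥ a') i) t := by
  convert hasDerivAt_mulVec (P := fun s => (g s)ᵀ) (P' := (g t * hat (Ω t))ᵀ)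
    (fun i j => hg j i) ha i using 3
  rw [Matrix.transpose_mul, hat_transpose, Matrix.neg_mul, Matrix.neg_mulVec,
    ← Matrix.mulVec_mulVec, hat_mulVec, cross_anticomm]

lemma hasDerivAt_pvec {g : ℝ → Matrix (Fin 3) (Fin 3) ℝ} {Ω : ℝ → R3} {t : ℝ}
    (hg : ∀ i j, HasDerivAt (fun s => g s i j) ((g t * hat (Ω t)) i j) t) (i : Fin 3) :
    HasDerivAt (fun s => pvec g s i) (crossProduct (pvec g t) (Ω t) i) t := by
  have h := hasDerivAt_transpose_mulVec (a := fun _ => ![0, 0, 1]) (a' := 0) hg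
    (fun i => hasDerivAt_const t _) i
  rw [Matrix.mulVec_zero, add_zero] at h
  exact h

/-- The momentum balance `K' = K × Ω`. -/
lemma hasDerivAt_Kmom {m r I1 I2 I3 : ℝ} {A : Matrix (Fin 3) (Fin 3) ℝ}
    {g : ℝ → Matrix (Fin 3) (Fin 3) ℝ} {Ω : ℝ → R3} {Ωd : R3} {t : ℝ}
    (hg : ∀ i j, HasDerivAt (fun s => g s i j) ((g t * hat (Ω t)) i j) t)
    (hΩ : ∀ i, HasDerivAt (fun s => Ω s i) (Ωd i) t)
    (hEq : Imat I1 I2 I3 *ᵥ Ωd =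
      crossProduct (Imat I1 I2 I3 *ᵥ Ω t) (Ω t) -
        (m * r^2) • (((g t)ᵀ * Aᵀ * A * g t) *ᵥ Ωd)) (i : Fin 3) :
    HasDerivAt (fun s => Kmom m r I1 I2 I3 A g Ω s i)
      (crossProduct (Kmom m r I1 I2 I3 A g Ω t) (Ω t) i) t := by
  -- The space-frame angular velocity `g Ω` has derivative `g Ω'`, since `hat(Ω) Ω = 0`.
  have hgΩ : ∀ i, HasDerivAt (fun s => (g s *ᵥ Ω s) i) ((g t *ᵥ Ωd) i) t := fun i => by
    have h := hasDerivAt_mulVec hg hΩ i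
    rwa [← Matrix.mulVec_mulVec, hat_mulVec, cross_self, Matrix.mulVec_zero, zero_add] at h
  have hconst : ∀ (M : Matrix (Fin 3) (Fin 3) ℝ) {v : ℝ → R3} {v' : R3},
      (∀ i, HasDerivAt (fun s => v s i) (v' i) t) →
      ∀ i, HasDerivAt (fun s => (M *ᵥ v s) i) ((M *ᵥ v') i) t := fun M v v' hv i => by
    have h := hasDerivAt_mulVec (P := fun _ => M) (P' := 0) (fun i j => hasDerivAt_const t _) hv i
    rwa [Matrix.zero_mulVec, zero_add] at h
  have hJ := hasDerivAt_transpose_mulVec hg (hconst (Aᵀ * A) hgΩ) i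
  have hK := (hconst (Imat I1 I2 I3) hΩ i).add (hJ.const_mul (m * r ^ 2))
  have hassoc : ∀ (s : ℝ) (v : R3), ((g s)ᵀ * Aᵀ * A * g s) *ᵥ v =
      (g s)ᵀ *ᵥ ((Aᵀ * A) *ᵥ (g s *ᵥ v)) := fun s v => by
    simp only [Matrix.mulVec_mulVec, Matrix.mul_assoc]
  have hfun : (fun s => Kmom m r I1 I2 I3 A g Ω s i) = fun s => (Imat I1 I2 I3 *ᵥ Ω s) i +
      m * r ^ 2 * ((g s)ᵀ *ᵥ ((Aᵀ * A) *ᵥ (g s *ᵥ Ω s))) i := by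
    funext s
    simp only [Kmom, hassoc, Pi.add_apply, Pi.smul_apply, smul_eq_mul]
  rw [hfun]
  refine hK.congr_deriv ?_
  rw [hEq]
  simp only [Kmom, hassoc, map_add, map_smul, LinearMap.add_apply, LinearMap.smul_apply,
    Pi.add_apply, Pi.sub_apply, Pi.smul_apply, smul_eq_mul]
  ring

lemma dot_mulVec_comm {S : Matrix (Fin 3) (Fin 3) ℝ} (hS : Sᵀ = S) (u v : R3) :
    (S *ᵥ u) ⬝ᵥ v = u ⬝ᵥ (S *ᵥ v) := by
  rw [Matrix.dotProduct_mulVec, ← Matrix.mulVec_transpose, hS]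

/-- By symmetry of `𝕀 + m r² J`, the equation of motion gives `K · Ω' = Ω · ((𝕀 Ω) × Ω) = 0`. -/
lemma Kmom_dot_eq_zero {m r I1 I2 I3 : ℝ} {A : Matrix (Fin 3) (Fin 3) ℝ}
    {g : ℝ → Matrix (Fin 3) (Fin 3) ℝ} {Ω : ℝ → R3} {Ωd : R3} {t : ℝ}
    (hEq : Imat I1 I2 I3 *ᵥ Ωd =
      crossProduct (Imat I1 I2 I3 *ᵥ Ω t) (Ω t) -
        (m * r^2) • (((g t)ᵀ * Aᵀ * A * g t) *ᵥ Ωd)) :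
    Kmom m r I1 I2 I3 A g Ω t ⬝ᵥ Ωd = 0 := by
  have hI : (Imat I1 I2 I3)ᵀ = Imat I1 I2 I3 := Matrix.diagonal_transpose _
  have hJ : ((g t)ᵀ * Aᵀ * A * g t)ᵀ = (g t)ᵀ * Aᵀ * A * g t := by
    simp only [Matrix.transpose_mul, Matrix.transpose_transpose, Matrix.mul_assoc]
  rw [Kmom, add_dotProduct, smul_dotProduct, dot_mulVec_comm hI, dot_mulVec_comm hJ, hEq,
    dotProduct_sub, dotProduct_smul, dot_cross_self, sub_add_cancel]

/-- Along solutions of the decoupled rotational equation of a rigid body with a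
generalized rolling constraint, the reduced energy `H = ½ K·Ω`, the integral
`F = K·K` and the Casimirs `C₁ = K·γ`, `C₂ = γ·γ` are all constant in time. -/
theorem stmt17 (m r I1 I2 I3 : ℝ) (hm : 0 < m) (hr : 0 < r)
    (h1 : 0 < I1) (h2 : 0 < I2) (h3 : 0 < I3)
    (A : Matrix (Fin 3) (Fin 3) ℝ)
    (g : ℝ → Matrix (Fin 3) (Fin 3) ℝ) (Ω Ωd : ℝ → R3)
    (horth : ∀ t, (g t)ᵀ * g t = 1)
    (hg : ∀ t i j, HasDerivAt (fun s => g s i j) ((g t * hat (Ω t)) i j) t)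
    (hΩ : ∀ t i, HasDerivAt (fun s => Ω s i) (Ωd t i) t)
    (hEq : ∀ t, Imat I1 I2 I3 *ᵥ Ωd t =
      crossProduct (Imat I1 I2 I3 *ᵥ Ω t) (Ω t) -
        (m * r^2) • (((g t)ᵀ * Aᵀ * A * g t) *ᵥ Ωd t)) :
    (∀ s t, (1/2) * (Kmom m r I1 I2 I3 A g Ω s ⬝ᵥ Ω s) =
            (1/2) * (Kmom m r I1 I2 I3 A g Ω t ⬝ᵥ Ω t)) ∧
    (∀ s t, Kmom m r I1 I2 I3 A g Ω s ⬝ᵥ Kmom m r I1 I2 I3 A g Ω s =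
            Kmom m r I1 I2 I3 A g Ω t ⬝ᵥ Kmom m r I1 I2 I3 A g Ω t) ∧
    (∀ s t, Kmom m r I1 I2 I3 A g Ω s ⬝ᵥ pvec g s =
            Kmom m r I1 I2 I3 A g Ω t ⬝ᵥ pvec g t) ∧
    (∀ s t, pvec g s ⬝ᵥ pvec g s = pvec g t ⬝ᵥ pvec g t) := by
  have hK := fun t => hasDerivAt_Kmom (m := m) (r := r) (A := A) (hg t) (hΩ t) (hEq t)
  have hγ := fun t => hasDerivAt_pvec (hg t)
  refine ⟨fun s t => ?_, dot_const_of_cross hK hK, dot_const_of_cross hK hγ,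
    dot_const_of_cross hγ hγ⟩
  congr 1
  refine const_of_hasDerivAt_zero (f := fun s => Kmom m r I1 I2 I3 A g Ω s ⬝ᵥ Ω s)
    (fun x => ?_) s t
  convert hasDerivAt_dot (hK x) (hΩ x) using 1
  rw [Kmom_dot_eq_zero (hEq x), add_zero, dotProduct_comm, dot_cross_self]

end
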